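/- Let Ω be a convex body in ℝ^m (a compact convex set with nonempty interior). For each fixed t > 0, the function x ↦ W_Ω(x,t) is positive on ℝ^m and strictly log-concave on ℝ^m; that is, for all x₁ ≠ x₂ in ℝ^m and all 0 < λ < 1, W_Ω((1−λ)x₁ + λx₂, t) > W_Ω(x₁,t)^{1−λ} · W_Ω(x₂,t)^{λ}. -/

import Mathlib

open MeasureTheory Metric Set

noncomputable section

/-- Weierstrass' (heat) kernel on `ℝ^m`. -/
def heatKernel (m : ℕ) (z : EuclideanSpace ℝ (Fin m)) (t : ℝ) : ℝ :=
  (4 * Real.pi * t) ^ (-(m : ℝ) / 2) * Real.exp (-‖z‖ ^ 2 / (4 * t))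

open scoped Pointwise

/-- One-dimensional Brunn-Minkowski, compact case. -/
theorem bm_compact {a b : ℝ} (ha : 0 < a) (hb : 0 < b) {K L C : Set ℝ}
    (hK : IsCompact K) (hL : IsCompact L) (hKn : K.Nonempty) (hLn : L.Nonempty)
    (hC : ∀ x ∈ K, ∀ y ∈ L, a * x + b * y ∈ C) :
    ENNReal.ofReal a * volume K + ENNReal.ofReal b * volume L ≤ volume C := by
  obtain ⟨k, hkK, hk⟩ := hK.exists_isGreatest hKn
  obtain ⟨l, hlL, hl⟩ := hL.exists_isLeast hLn
  have e1 : volume ((fun x => b * l + a * x) '' K) = ENNReal.ofReal a * volume K := by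
    have : (fun x => b * l + a * x) '' K = (fun x => b * l + x) '' (a • K) := by
      rw [← Set.image_smul, Set.image_image]; rfl
    rw [this, Set.image_add_left, measure_preimage_add, Measure.addHaar_smul]
    simp [abs_of_pos ha]
  have e2 : volume ((fun x => a * k + b * x) '' L) = ENNReal.ofReal b * volume L := by
    have : (fun x => a * k + b * x) '' L = (fun x => a * k + x) '' (b • L) := by
      rw [← Set.image_smul, Set.image_image]; rfl
    rw [this, Set.image_add_left, measure_preimage_add, Measure.addHaar_smul]
    simp [abs_of_pos hb]
  rw [← e1, ← e2, ← measure_union₀]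
  · apply measure_mono
    rintro z (⟨x, hx, rfl⟩ | ⟨y, hy, rfl⟩)
    · have := hC x hx l hlL
      simpa [add_comm] using this
    · exact hC k hkK y hy
  · exact (hL.image (by fun_prop)).measurableSet.nullMeasurableSet
  · refine measure_mono_null (t := {a * k + b * l}) ?_ (by simp)
    rintro z ⟨⟨x, hx, rfl⟩, ⟨y, hy, hxy⟩⟩
    have h1 := hk hx
    have h2 := hl hy
    simp only at hxy
    have h3 : a * x ≤ a * k := by gcongr
    have h4 : b * l ≤ b * y := by gcongr
    simp only [mem_singleton_iff]
    linarith

theorem bm1 {a b : ℝ} (ha : 0 < a) (hb : 0 < b) {A B C : Set ℝ}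
    (hA : MeasurableSet A) (hB : MeasurableSet B) (hAn : A.Nonempty) (hBn : B.Nonempty)
    (hC : ∀ x ∈ A, ∀ y ∈ B, a * x + b * y ∈ C) :
    ENNReal.ofReal a * volume A + ENNReal.ofReal b * volume B ≤ volume C := by
  obtain ⟨x0, hx0⟩ := hAn
  obtain ⟨y0, hy0⟩ := hBn
  rw [hA.measure_eq_iSup_isCompact, hB.measure_eq_iSup_isCompact]
  simp only [ENNReal.mul_iSup]
  simp only [iSup_and']
  refine ENNReal.biSup_add_biSup_le' ⟨∅, by simp⟩ ⟨∅, by simp⟩ ?_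
  rintro K ⟨hKA, hK⟩ L ⟨hLB, hL⟩
  have := bm_compact ha hb (hK.insert x0) (hL.insert y0) (by simp) (by simp) (C := C) (by
    intro x hx y hy
    exact hC x (insert_subset hx0 hKA hx) y (insert_subset hy0 hLB hy))
  refine le_trans ?_ this
  gcongr <;> exact subset_insert _ _

theorem pl_norm {a b : ℝ} (ha : 0 < a) (hb : 0 < b) (hab : a + b = 1) {f g h : ℝ → ℝ}
    (hf : Measurable f) (hg : Measurable g) (hh : Measurable h)
    (f0 : ∀ x, 0 ≤ f x) (g0 : ∀ x, 0 ≤ g x) (h0 : ∀ x, 0 ≤ h x)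
    (f1 : ∀ x, f x ≤ 1) (g1 : ∀ x, g x ≤ 1)
    (fs : ∀ s < 1, ∃ x, s < f x) (gs : ∀ s < 1, ∃ x, s < g x)
    (H : ∀ x y, f x ^ a * g y ^ b ≤ h (a * x + b * y)) :
    ENNReal.ofReal a * (∫⁻ x, ENNReal.ofReal (f x)) +
      ENNReal.ofReal b * (∫⁻ x, ENNReal.ofReal (g x))
      ≤ ∫⁻ x, ENNReal.ofReal (h x) := by
  rw [lintegral_eq_lintegral_meas_lt _ (ae_of_all _ f0) hf.aemeasurable,
    lintegral_eq_lintegral_meas_lt _ (ae_of_all _ g0) hg.aemeasurable,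
    lintegral_eq_lintegral_meas_lt _ (ae_of_all _ h0) hh.aemeasurable,
    ← lintegral_const_mul' _ _ ENNReal.ofReal_ne_top,
    ← lintegral_const_mul' _ _ ENNReal.ofReal_ne_top]
  refine (le_lintegral_add _ _).trans (setLIntegral_mono' measurableSet_Ioi ?_)
  intro t ht
  have ht : 0 < t := ht
  rcases lt_or_ge t 1 with h1 | h1
  · apply bm1 ha hb (measurableSet_lt measurable_const hf) (measurableSet_lt measurable_const hg)
      (fs t h1) (gs t h1)
    intro x hx y hy
    have hx : t < f x := hx
    have hy : t < g y := hy
    show t < h _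
    refine lt_of_lt_of_le ?_ (H x y)
    calc t = t ^ a * t ^ b := by rw [← Real.rpow_add ht, hab, Real.rpow_one]
      _ < f x ^ a * g y ^ b := by gcongr
  · have e1 : {x | t < f x} = ∅ := by
      ext x; simpa using (f1 x).trans h1
    have e2 : {x | t < g x} = ∅ := by
      ext x; simpa using (g1 x).trans h1
    simp [e1, e2]

theorem amgm {a b : ℝ} (ha : 0 < a) (hb : 0 < b) (hab : a + b = 1) (x y : ENNReal) :
    x ^ a * y ^ b ≤ ENNReal.ofReal a * x + ENNReal.ofReal b * y := by
  by_cases hx : x = ⊤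
  · simp [hx, ENNReal.mul_top, ha]
  by_cases hy : y = ⊤
  · simp [hy, ENNReal.mul_top, hb]
  lift x to NNReal using hx
  lift y to NNReal using hy
  have := NNReal.geom_mean_le_arith_mean2_weighted a.toNNReal b.toNNReal x y (by
    rw [← Real.toNNReal_add ha.le hb.le, hab, Real.toNNReal_one])
  rw [Real.coe_toNNReal _ ha.le, Real.coe_toNNReal _ hb.le] at this
  rw [← ENNReal.coe_rpow_of_nonneg _ ha.le, ← ENNReal.coe_rpow_of_nonneg _ hb.le]
  unfold ENNReal.ofReal
  exact_mod_cast this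

theorem pl_bdd {a b : ℝ} (ha : 0 < a) (hb : 0 < b) (hab : a + b = 1) {f g h : ℝ → ℝ}
    (hf : Measurable f) (hg : Measurable g) (hh : Measurable h)
    (f0 : ∀ x, 0 ≤ f x) (g0 : ∀ x, 0 ≤ g x) (h0 : ∀ x, 0 ≤ h x)
    (f1 : BddAbove (range f)) (g1 : BddAbove (range g))
    (H : ∀ x y, f x ^ a * g y ^ b ≤ h (a * x + b * y)) :
    (∫⁻ x, ENNReal.ofReal (f x)) ^ a * (∫⁻ x, ENNReal.ofReal (g x)) ^ b
      ≤ ∫⁻ x, ENNReal.ofReal (h x) := by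
  by_cases hfz : ∀ x, f x = 0
  · simp [hfz, ha]
  by_cases hgz : ∀ x, g x = 0
  · simp [hgz, hb]
  push Not at hfz hgz
  obtain ⟨x0, hx0⟩ := hfz
  obtain ⟨y0, hy0⟩ := hgz
  set A := ⨆ x, f x with hA
  set B := ⨆ x, g x with hB
  have hfA : ∀ x, f x ≤ A := fun x => le_ciSup f1 x
  have hgB : ∀ x, g x ≤ B := fun x => le_ciSup g1 x
  have A0 : 0 < A := ((f0 x0).lt_of_ne' hx0).trans_le (hfA x0)
  have B0 : 0 < B := ((g0 y0).lt_of_ne' hy0).trans_le (hgB y0)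
  have M0 : 0 < A ^ a * B ^ b := by positivity
  have key := pl_norm ha hb hab (f := fun x => A⁻¹ * f x) (g := fun x => B⁻¹ * g x)
    (h := fun x => (A ^ a * B ^ b)⁻¹ * h x) (by fun_prop) (by fun_prop) (by fun_prop)
    (fun x => mul_nonneg (by positivity) (f0 x)) (fun x => mul_nonneg (by positivity) (g0 x))
    (fun x => mul_nonneg (by positivity) (h0 x))
    (fun x => by rw [inv_mul_le_iff₀ A0, mul_one]; exact hfA x)
    (fun x => by rw [inv_mul_le_iff₀ B0, mul_one]; exact hgB x)
    (fun s hs => by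
      obtain ⟨x, hx⟩ := exists_lt_of_lt_ciSup (show A * s < ⨆ x, f x by rw [← hA]; nlinarith)
      exact ⟨x, by rw [lt_inv_mul_iff₀ A0]; exact hx⟩)
    (fun s hs => by
      obtain ⟨x, hx⟩ := exists_lt_of_lt_ciSup (show B * s < ⨆ x, g x by rw [← hB]; nlinarith)
      exact ⟨x, by rw [lt_inv_mul_iff₀ B0]; exact hx⟩)
    (fun x y => by
      rw [Real.mul_rpow (by positivity) (f0 x), Real.mul_rpow (by positivity) (g0 y),
        Real.inv_rpow A0.le, Real.inv_rpow B0.le, mul_inv]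
      have := H x y
      calc _ = (A ^ a)⁻¹ * (B ^ b)⁻¹ * (f x ^ a * g y ^ b) := by ring
        _ ≤ _ := by gcongr)
  replace key := (amgm ha hb hab _ _).trans key
  have sc : ∀ (c : ℝ) (u : ℝ → ℝ), 0 < c →
      ∫⁻ x, ENNReal.ofReal (u x) = ENNReal.ofReal c * ∫⁻ x, ENNReal.ofReal (c⁻¹ * u x) := by
    intro c u hc
    rw [← lintegral_const_mul' _ _ ENNReal.ofReal_ne_top]
    congr 1; ext x
    rw [← ENNReal.ofReal_mul hc.le, mul_inv_cancel_left₀ hc.ne']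
  rw [sc A f A0, sc B g B0, sc _ h M0, ENNReal.mul_rpow_of_nonneg _ _ ha.le,
    ENNReal.mul_rpow_of_nonneg _ _ hb.le, ENNReal.ofReal_mul (by positivity),
    ← ENNReal.ofReal_rpow_of_pos A0, ← ENNReal.ofReal_rpow_of_pos B0]
  calc _ = ENNReal.ofReal A ^ a * ENNReal.ofReal B ^ b *
      ((∫⁻ x, ENNReal.ofReal (A⁻¹ * f x)) ^ a * (∫⁻ x, ENNReal.ofReal (B⁻¹ * g x)) ^ b) := by ring
    _ ≤ _ := by gcongr

/-- The Prékopa-Leindler property of a measure (weights `a`, `b`). -/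
def PLProp (a b : ℝ) {E : Type*} [AddCommGroup E] [Module ℝ E] [MeasurableSpace E]
    (μ : Measure E) : Prop :=
  ∀ f g h : E → ENNReal, Measurable f → Measurable g → Measurable h →
    (∀ x y, f x ^ a * g y ^ b ≤ h (a • x + b • y)) →
    (∫⁻ x, f x ∂μ) ^ a * (∫⁻ x, g x ∂μ) ^ b ≤ ∫⁻ x, h x ∂μ

theorem trunc_tendsto (f : ℝ → ENNReal) (hf : Measurable f) :
    Filter.Tendsto (fun n : ℕ => ∫⁻ x, min (f x) n) Filter.atTop (nhds (∫⁻ x, f x)) := by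
  apply lintegral_tendsto_of_tendsto_of_monotone
  · intro n; exact (hf.min measurable_const).aemeasurable
  · refine ae_of_all _ fun x m n hmn => ?_
    exact min_le_min le_rfl (by exact_mod_cast hmn)
  · refine ae_of_all _ fun x => ?_
    have := (tendsto_const_nhds (x := f x)).min ENNReal.tendsto_nat_nhds_top
    simpa using this

theorem pl_real {a b : ℝ} (ha : 0 < a) (hb : 0 < b) (hab : a + b = 1) :
    PLProp a b (volume : Measure ℝ) := by
  intro f g h hf hg hh H
  have hfin : ∀ (u : ENNReal) (n : ℕ), min u n ≠ ⊤ := fun u n =>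
    ((min_le_right _ _).trans_lt (ENNReal.natCast_lt_top n)).ne
  have key : ∀ n : ℕ, (∫⁻ x, min (f x) n) ^ a * (∫⁻ x, min (g x) n) ^ b ≤ ∫⁻ x, h x := by
    intro n
    have bd : ∀ u : ℝ → ENNReal, BddAbove (range fun x => (min (u x) n).toReal) := by
      rintro u
      refine ⟨n, ?_⟩
      rintro _ ⟨x, rfl⟩
      simpa using ENNReal.toReal_mono (ENNReal.natCast_ne_top n) (min_le_right (u x) n)
    have := pl_bdd ha hb hab (f := fun x => (min (f x) n).toReal)
      (g := fun x => (min (g x) n).toReal) (h := fun x => (min (h x) n).toReal)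
      (by fun_prop) (by fun_prop) (by fun_prop) (by simp) (by simp) (by simp) (bd f) (bd g) (by
        intro x y
        rw [ENNReal.toReal_rpow, ENNReal.toReal_rpow, ← ENNReal.toReal_mul]
        apply ENNReal.toReal_mono (hfin _ _)
        apply le_min
        · refine le_trans ?_ (H x y)
          gcongr <;> exact min_le_left _ _
        · calc _ ≤ (n : ENNReal) ^ a * (n : ENNReal) ^ b := by
                gcongr <;> exact min_le_right _ _
            _ = n := by rw [← ENNReal.rpow_add_of_nonneg _ _ ha.le hb.le, hab, ENNReal.rpow_one])
    simp only [ENNReal.ofReal_toReal (hfin _ _)] at this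
    refine this.trans (lintegral_mono fun x => min_le_left _ _)
  by_cases h1 : ∫⁻ x, f x = 0
  · simp [h1, ha]
  by_cases h2 : ∫⁻ x, g x = 0
  · simp [h2, hb]
  refine le_of_tendsto (ENNReal.Tendsto.mul ((ENNReal.continuous_rpow_const.tendsto _).comp
    (trunc_tendsto f hf)) (Or.inl ?_) ((ENNReal.continuous_rpow_const.tendsto _).comp
    (trunc_tendsto g hg)) (Or.inl ?_)) (Filter.Eventually.of_forall key)
  · simp [h1, ha.not_gt]
  · simp [h2, hb.not_gt]

theorem pl_prod {a b : ℝ} {E F : Type*} [AddCommGroup E] [Module ℝ E]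
    [MeasurableSpace E] [AddCommGroup F] [Module ℝ F] [MeasurableSpace F] (μ : Measure E)
    (ν : Measure F) [SFinite μ] [SFinite ν] (hE : PLProp a b μ) (hF : PLProp a b ν) :
    PLProp a b (μ.prod ν) := by
  intro f g h hf hg hh H
  rw [lintegral_prod _ hf.aemeasurable, lintegral_prod _ hg.aemeasurable,
    lintegral_prod _ hh.aemeasurable]
  apply hE _ _ _ hf.lintegral_prod_right' hg.lintegral_prod_right' hh.lintegral_prod_right'
  intro x y
  apply hF _ _ _ (by fun_prop) (by fun_prop) (by fun_prop)
  intro x' y'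
  exact H (x, x') (y, y')

theorem pl_equiv {a b : ℝ} {E F : Type*} [AddCommGroup E] [Module ℝ E]
    [MeasurableSpace E] [AddCommGroup F] [Module ℝ F] [MeasurableSpace F] {μ : Measure E}
    {ν : Measure F} (e : E ≃ᵐ F) (he : MeasurePreserving e μ ν)
    (hl : ∀ x y, e (a • x + b • y) = a • e x + b • e y) (hE : PLProp a b μ) :
    PLProp a b ν := by
  intro f g h hf hg hh H
  rw [← he.lintegral_comp hf, ← he.lintegral_comp hg, ← he.lintegral_comp hh]
  apply hE _ _ _ (hf.comp e.measurable) (hg.comp e.measurable) (hh.comp e.measurable)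
  intro x y
  simp only [Function.comp, hl]
  exact H _ _

theorem pl_pi {a b : ℝ} (ha : 0 < a) (hb : 0 < b) (hab : a + b = 1) (n : ℕ) :
    PLProp a b (volume : Measure (Fin n → ℝ)) := by
  induction n with
  | zero =>
    intro f g h hf hg hh H
    rw [Measure.volume_pi_eq_dirac 0]
    simpa using H 0 0
  | succ n ih =>
    have e := (volume_preserving_piFinSuccAbove (fun _ : Fin (n + 1) => ℝ) 0).symm
    refine pl_equiv _ e ?_ (pl_prod _ _ (pl_real ha hb hab) ih)
    intro x y
    ext i
    refine Fin.cases ?_ (fun i => ?_) i <;> simp [MeasurableEquiv.piFinSuccAbove]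

theorem pl_euclid {a b : ℝ} (ha : 0 < a) (hb : 0 < b) (hab : a + b = 1) (n : ℕ) :
    PLProp a b (volume : Measure (EuclideanSpace ℝ (Fin n))) :=
  pl_equiv (MeasurableEquiv.toLp 2 (Fin n → ℝ)) (PiLp.volume_preserving_toLp (Fin n))
    (fun _ _ => rfl) (pl_pi ha hb hab n)

section heat

variable {m : ℕ}

theorem hk_cont (t : ℝ) : Continuous (fun z : EuclideanSpace ℝ (Fin m) => heatKernel m z t) := by
  unfold heatKernel; fun_prop

theorem hk_pos {t : ℝ} (ht : 0 < t) (z : EuclideanSpace ℝ (Fin m)) : 0 < heatKernel m z t := by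
  unfold heatKernel; positivity

theorem hk_int {Ω : Set (EuclideanSpace ℝ (Fin m))} (hcomp : IsCompact Ω) (t : ℝ)
    (x : EuclideanSpace ℝ (Fin m)) :
    IntegrableOn (fun y => heatKernel m (x - y) t) Ω :=
  ((hk_cont t).comp (continuous_const.sub continuous_id)).continuousOn.integrableOn_compact hcomp

theorem W_pos {Ω : Set (EuclideanSpace ℝ (Fin m))} (hcomp : IsCompact Ω)
    (hint : (interior Ω).Nonempty) {t : ℝ} (ht : 0 < t) (x : EuclideanSpace ℝ (Fin m)) :
    0 < ∫ y in Ω, heatKernel m (x - y) t := by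
  rw [setIntegral_pos_iff_support_of_nonneg_ae (ae_of_all _ fun y => (hk_pos ht _).le)
    (hk_int hcomp t x)]
  have : (Function.support fun y => heatKernel m (x - y) t) = univ := by
    ext y; simp [(hk_pos ht (x - y)).ne']
  rw [this, univ_inter]
  exact Measure.measure_pos_of_nonempty_interior _ hint

theorem hk_logconcave {a b : ℝ} (ha : 0 < a) (hb : 0 < b) (hab : a + b = 1) {t : ℝ} (ht : 0 < t)
    (z w : EuclideanSpace ℝ (Fin m)) :
    heatKernel m z t ^ a * heatKernel m w t ^ b ≤ heatKernel m (a • z + b • w) t := by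
  unfold heatKernel
  set c := (4 * Real.pi * t) ^ (-(m : ℝ) / 2) with hc
  have c0 : 0 < c := by positivity
  rw [Real.mul_rpow c0.le (Real.exp_pos _).le, Real.mul_rpow c0.le (Real.exp_pos _).le,
    ← Real.exp_mul, ← Real.exp_mul]
  have e : c ^ a * c ^ b = c := by rw [← Real.rpow_add c0, hab, Real.rpow_one]
  have n1 : ‖a • z + b • w‖ ≤ a * ‖z‖ + b * ‖w‖ := by
    refine (norm_add_le _ _).trans (le_of_eq ?_)
    simp [norm_smul, abs_of_pos ha, abs_of_pos hb]
  have n2 : ‖a • z + b • w‖ ^ 2 ≤ a * ‖z‖ ^ 2 + b * ‖w‖ ^ 2 := by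
    have : ‖a • z + b • w‖ ^ 2 ≤ (a * ‖z‖ + b * ‖w‖) ^ 2 := by gcongr
    have e2 : a * ‖z‖ ^ 2 + b * ‖w‖ ^ 2 - (a * ‖z‖ + b * ‖w‖) ^ 2
      = a * b * (‖z‖ - ‖w‖) ^ 2 := by
      obtain rfl : b = 1 - a := by linarith
      ring
    have : 0 ≤ a * b * (‖z‖ - ‖w‖) ^ 2 := by positivity
    linarith
  calc _ = (c ^ a * c ^ b) * (Real.exp (-‖z‖ ^ 2 / (4 * t) * a) *
        Real.exp (-‖w‖ ^ 2 / (4 * t) * b)) := by ring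
    _ = c * Real.exp (-(a * ‖z‖ ^ 2 + b * ‖w‖ ^ 2) / (4 * t)) := by
        rw [e, ← Real.exp_add]; congr 2; ring
    _ ≤ _ := by gcongr

theorem W_logconcave {Ω : Set (EuclideanSpace ℝ (Fin m))} (hconv : Convex ℝ Ω)
    (hcomp : IsCompact Ω) (hint : (interior Ω).Nonempty)
    {a b : ℝ} (ha : 0 < a) (hb : 0 < b) (hab : a + b = 1) {t : ℝ} (ht : 0 < t)
    (x₁ x₂ : EuclideanSpace ℝ (Fin m)) :
    (∫ y in Ω, heatKernel m (x₁ - y) t) ^ a * (∫ y in Ω, heatKernel m (x₂ - y) t) ^ b ≤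
      ∫ y in Ω, heatKernel m (a • x₁ + b • x₂ - y) t := by
  have hm := hcomp.measurableSet
  have L : ∀ x, ENNReal.ofReal (∫ y in Ω, heatKernel m (x - y) t)
      = ∫⁻ y, Ω.indicator (fun y => ENNReal.ofReal (heatKernel m (x - y) t)) y := by
    intro x
    rw [ofReal_integral_eq_lintegral_ofReal (hk_int hcomp t x)
      (ae_of_all _ fun y => (hk_pos ht _).le), lintegral_indicator hm]
  have ms : ∀ x, Measurable (Ω.indicator (fun y => ENNReal.ofReal (heatKernel m (x - y) t))) := by
    intro x
    refine Measurable.indicator ?_ hm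
    exact ((hk_cont t).comp (continuous_const.sub continuous_id)).measurable.ennreal_ofReal
  rw [← ENNReal.ofReal_le_ofReal_iff (W_pos hcomp hint ht _).le,
    ENNReal.ofReal_mul (Real.rpow_nonneg (W_pos hcomp hint ht _).le _),
    ← ENNReal.ofReal_rpow_of_pos (W_pos hcomp hint ht _),
    ← ENNReal.ofReal_rpow_of_pos (W_pos hcomp hint ht _), L, L, L]
  apply pl_euclid ha hb hab m _ _ _ (ms _) (ms _) (ms _)
  intro y₁ y₂
  by_cases h1 : y₁ ∈ Ω
  swap
  · simp [h1, ha]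
  by_cases h2 : y₂ ∈ Ω
  swap
  · simp [h2, hb]
  have h3 : a • y₁ + b • y₂ ∈ Ω := hconv h1 h2 ha.le hb.le hab
  rw [indicator_of_mem h1, indicator_of_mem h2, indicator_of_mem h3,
    ENNReal.ofReal_rpow_of_pos (hk_pos ht _), ENNReal.ofReal_rpow_of_pos (hk_pos ht _),
    ← ENNReal.ofReal_mul (Real.rpow_nonneg (hk_pos ht _).le _)]
  apply ENNReal.ofReal_le_ofReal
  refine (hk_logconcave ha hb hab ht _ _).trans (le_of_eq ?_)
  congr 1
  module

theorem W_analytic {Ω : Set (EuclideanSpace ℝ (Fin m))}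
    (hcomp : IsCompact Ω) {t : ℝ} (ht : 0 < t)
    (x v : EuclideanSpace ℝ (Fin m)) :
    AnalyticOnNhd ℝ (fun s : ℝ => ∫ y in Ω, heatKernel m (x + s • v - y) t) univ := by
  set X : EuclideanSpace ℝ (Fin m) → ℝ := fun y => inner ℝ v y / (2 * t) with hX
  set d : EuclideanSpace ℝ (Fin m) → ENNReal := fun y => ENNReal.ofReal (heatKernel m (x - y) t)
    with hd
  set μ := (volume.restrict Ω).withDensity d with hμ
  have dm : Measurable d :=
    ((hk_cont t).comp (continuous_const.sub continuous_id)).measurable.ennreal_ofReal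
  have hI : ProbabilityTheory.integrableExpSet X μ = univ := by
    ext s
    simp only [ProbabilityTheory.integrableExpSet, mem_ofPred_eq, mem_univ, iff_true]
    rw [hμ, integrable_withDensity_iff dm (ae_of_all _ fun y => by simp [hd])]
    have : Continuous fun y => Real.exp (s * X y) * (d y).toReal := by
      simp only [hX, hd]
      simp_rw [ENNReal.toReal_ofReal (hk_pos ht _).le]
      exact Continuous.mul (by fun_prop) ((hk_cont t).comp (continuous_const.sub continuous_id))
    exact this.continuousOn.integrableOn_compact hcomp
  have e : (fun s : ℝ => ∫ y in Ω, heatKernel m (x + s • v - y) t) =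
      fun s => Real.exp (-(s ^ 2 * ‖v‖ ^ 2 + 2 * s * inner ℝ x v) / (4 * t))
        * ProbabilityTheory.mgf X μ s := by
    ext s
    rw [ProbabilityTheory.mgf, hμ, integral_withDensity_eq_integral_toReal_smul dm
      (ae_of_all _ fun y => by simp [hd]), ← integral_const_mul]
    congr 1
    ext y
    have hdy : (d y).toReal = heatKernel m (x - y) t := ENNReal.toReal_ofReal (hk_pos ht _).le
    rw [hdy]
    simp only [hX, heatKernel, smul_eq_mul]
    rw [mul_left_comm, ← Real.exp_add, mul_assoc _ (Real.exp _) (Real.exp _), ← Real.exp_add]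
    congr 2
    have : ‖x + s • v - y‖ ^ 2 = ‖x - y‖ ^ 2 + 2 * s * (inner ℝ x v - inner ℝ v y)
        + s ^ 2 * ‖v‖ ^ 2 := by
      have : x + s • v - y = (x - y) + s • v := by abel
      rw [this, norm_add_sq_real, norm_smul, inner_smul_right, inner_sub_left,
        real_inner_comm v y, mul_pow, Real.norm_eq_abs, sq_abs]
      ring
    rw [this]
    field_simp
    ring
  rw [e]
  intro s _
  refine AnalyticAt.mul ?_ (ProbabilityTheory.analyticAt_mgf (by simp [hI]))
  fun_prop (disch := positivity)

theorem W_decay {Ω : Set (EuclideanSpace ℝ (Fin m))}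
    (hcomp : IsCompact Ω) {t : ℝ} (ht : 0 < t)
    (x v : EuclideanSpace ℝ (Fin m)) (hv : v ≠ 0) :
    Filter.Tendsto (fun s : ℝ => ∫ y in Ω, heatKernel m (x + s • v - y) t) Filter.atTop
      (nhds 0) := by
  have : (0 : ℝ) = ∫ y in Ω, (0 : ℝ) := by simp
  rw [this]
  refine tendsto_integral_filter_of_dominated_convergence
    (fun _ => (4 * Real.pi * t) ^ (-(m : ℝ) / 2)) ?_ ?_ ?_ ?_
  · exact Filter.Eventually.of_forall fun s => (hk_int hcomp t _).aestronglyMeasurable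
  · refine Filter.Eventually.of_forall fun s => ae_of_all _ fun y => ?_
    rw [Real.norm_of_nonneg (hk_pos ht _).le, heatKernel]
    apply mul_le_of_le_one_right (by positivity)
    rw [Real.exp_le_one_iff, neg_div]
    have : 0 ≤ ‖x + s • v - y‖ ^ 2 / (4 * t) := by positivity
    linarith
  · exact integrableOn_const hcomp.measure_lt_top.ne
  · refine ae_of_all _ fun y => ?_
    unfold heatKernel
    rw [← mul_zero ((4 * Real.pi * t) ^ (-(m : ℝ) / 2))]
    refine Filter.Tendsto.const_mul _ (Real.tendsto_exp_atBot.comp ?_)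
    have h1 : Filter.Tendsto (fun s : ℝ => s * ‖v‖ + -‖x - y‖) Filter.atTop Filter.atTop :=
      Filter.tendsto_atTop_add_const_right _ _
        (Filter.Tendsto.atTop_mul_const (norm_pos_iff.mpr hv) Filter.tendsto_id)
    have h2 : Filter.Tendsto (fun s : ℝ => ‖x + s • v - y‖) Filter.atTop Filter.atTop := by
      refine Filter.tendsto_atTop_mono (fun s => ?_) h1
      have e : s • v = (x + s • v - y) - (x - y) := by abel
      have h3 := norm_sub_le (x + s • v - y) (x - y)
      rw [← e, norm_smul, Real.norm_eq_abs] at h3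
      have h4 : s * ‖v‖ ≤ |s| * ‖v‖ := by gcongr; exact le_abs_self s
      linarith
    have h5 := ((Filter.tendsto_pow_atTop two_ne_zero).comp h2).atTop_div_const
      (show 0 < 4 * t by positivity)
    refine (Filter.tendsto_neg_atTop_atBot.comp h5).congr fun s => ?_
    simp [Function.comp, neg_div]

/-- A positive, log-concave, analytic function decaying at both ends is strictly log-concave. -/
theorem strict_aux (g : ℝ → ℝ) (hg0 : ∀ s, 0 < g s)
    (hlc : ∀ p q a b : ℝ, 0 < a → 0 < b → a + b = 1 → g p ^ a * g q ^ b ≤ g (a * p + b * q))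
    (han : AnalyticOnNhd ℝ g univ) (hp : Filter.Tendsto g Filter.atTop (nhds 0))
    (hm : Filter.Tendsto (fun s => g (-s)) Filter.atTop (nhds 0))
    (l : ℝ) (l0 : 0 < l) (l1 : l < 1) : g 0 ^ (1 - l) * g 1 ^ l < g l := by
  by_contra hcon
  push Not at hcon
  set A := Real.log (g 0) with hA
  set B := Real.log (g 1) - Real.log (g 0) with hB
  have hlog : ∀ p q a b : ℝ, 0 < a → 0 < b → a + b = 1 →
      a * Real.log (g p) + b * Real.log (g q) ≤ Real.log (g (a * p + b * q)) := by
    intro p q a b ha hb hab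
    have := Real.log_le_log (mul_pos (Real.rpow_pos_of_pos (hg0 p) a)
      (Real.rpow_pos_of_pos (hg0 q) b)) (hlc p q a b ha hb hab)
    rwa [Real.log_mul (Real.rpow_pos_of_pos (hg0 p) a).ne' (Real.rpow_pos_of_pos (hg0 q) b).ne',
      Real.log_rpow (hg0 p), Real.log_rpow (hg0 q)] at this
  have hl : Real.log (g l) ≤ A + B * l := by
    have := Real.log_le_log (hg0 l) hcon
    rw [Real.log_mul (Real.rpow_pos_of_pos (hg0 _) _).ne' (Real.rpow_pos_of_pos (hg0 _) _).ne',
      Real.log_rpow (hg0 _), Real.log_rpow (hg0 _)] at this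
    rw [hA, hB]
    linarith
  have heq : ∀ s, 0 < s → s < l → g s = Real.exp (A + B * s) := by
    intro s s0 sl
    rw [← Real.exp_log (hg0 s)]
    congr 1
    apply le_antisymm
    · -- `l` lies between `s` and `1`
      have h1 : 0 < 1 - s := by linarith
      have := hlog s 1 ((1 - l) / (1 - s)) ((l - s) / (1 - s)) (div_pos (by linarith) h1)
        (div_pos (by linarith) h1) (by field_simp; ring)
      have e : (1 - l) / (1 - s) * s + (l - s) / (1 - s) * 1 = l := by field_simp; ring
      rw [e] at this
      have h2 := this.trans hl
      rw [div_mul_eq_mul_div, div_mul_eq_mul_div, ← add_div, div_le_iff₀ h1] at h2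
      have e3 : Real.log (g 1) = A + B := by rw [hA, hB]; ring
      rw [e3] at h2
      have h4 : (1 - l) * Real.log (g s) ≤ (1 - l) * (A + B * s) := by linarith
      exact le_of_mul_le_mul_left h4 (by linarith)
    · have := hlog 0 1 (1 - s) s (by linarith) s0 (by ring)
      have e : (1 - s) * 0 + s * 1 = s := by ring
      rw [e] at this
      rw [hA, hB]
      linarith
  have hfun : g = fun s => Real.exp (A + B * s) := by
    refine han.eq_of_eventuallyEq (fun s _ => by fun_prop) (z₀ := l / 2) ?_
    filter_upwards [Ioo_mem_nhds (show 0 < l / 2 by linarith) (show l / 2 < l by linarith)]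
      with s hs
    exact heq s hs.1 hs.2
  have h1 := hp.mul hm
  have h2 : (fun s => g s * g (-s)) = fun _ => Real.exp (2 * A) := by
    ext s
    rw [hfun, ← Real.exp_add]
    congr 1; ring
  rw [h2, mul_zero] at h1
  exact (Real.exp_pos (2 * A)).ne' (tendsto_nhds_unique tendsto_const_nhds h1)

end heat

theorem stmt12 {m : ℕ} (Ω : Set (EuclideanSpace ℝ (Fin m)))
    (hconv : Convex ℝ Ω) (hcomp : IsCompact Ω) (hint : (interior Ω).Nonempty)
    (t : ℝ) (ht : 0 < t) :
    (∀ x : EuclideanSpace ℝ (Fin m), 0 < ∫ y in Ω, heatKernel m (x - y) t) ∧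
    (∀ x₁ x₂ : EuclideanSpace ℝ (Fin m), x₁ ≠ x₂ → ∀ l : ℝ, 0 < l → l < 1 →
      (∫ y in Ω, heatKernel m (x₁ - y) t) ^ (1 - l) *
        (∫ y in Ω, heatKernel m (x₂ - y) t) ^ l <
      ∫ y in Ω, heatKernel m ((1 - l) • x₁ + l • x₂ - y) t) := by
  refine ⟨W_pos hcomp hint ht, ?_⟩
  intro x₁ x₂ hne l l0 l1
  have hv : x₂ - x₁ ≠ 0 := sub_ne_zero.mpr hne.symm
  have := strict_aux (fun s : ℝ => ∫ y in Ω, heatKernel m (x₁ + s • (x₂ - x₁) - y) t)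
    (fun s => W_pos hcomp hint ht _)
    (fun p q a b ha hb hab => by
      refine (W_logconcave hconv hcomp hint ha hb hab ht _ _).trans (le_of_eq ?_)
      have : a • (x₁ + p • (x₂ - x₁)) + b • (x₁ + q • (x₂ - x₁))
          = x₁ + (a * p + b * q) • (x₂ - x₁) := by
        obtain rfl : b = 1 - a := by linarith
        module
      rw [this])
    (W_analytic hcomp ht _ _) (W_decay hcomp ht _ _ hv)
    (by
      simpa only [smul_neg, neg_smul] using
        W_decay hcomp ht x₁ (-(x₂ - x₁)) (neg_ne_zero.mpr hv)) l l0 l1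
  have e : x₁ + l • (x₂ - x₁) = (1 - l) • x₁ + l • x₂ := by module
  simpa [e] using this
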